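/- arXiv:2306.04778 — 2 statements merged into one kernel-verified Lean document; each statement's English description precedes it below -/
import Mathlib

section
/- No scoring rule satisfies Counterfactual Pareto-Regularity: for every scoring rule S there exist a prediction f ∈ Δ(A) and two datasets y, y′ of equal size such that p̄(y) ≻_f p̄(y′) yet L_S(f, y′) ≤ L_S(f, y). -/
/-! A scoring rule's loss is an average of per-observation scores, so it cannot reward a dataset
for matching the prediction `f` in its proportions. Let `f` be the empirical distribution of a
dataset `(a, b)` with `a ≠ b`, and let `c ∈ {a, b}` be the outcome with the smaller score at `f`.
The dataset `(a, b)` matches `f` exactly, so it is a Pareto improvement over `(c, c)` with respect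
to `f`; but the loss of `(c, c)` is `min (S f a) (S f b)`, which is at most the average of the two
scores, the loss of `(a, b)`. -/

open Finset

/-- Empirical distribution of a dataset `y : Fin n → Fin d`. -/
noncomputable def emp {d n : ℕ} (y : Fin n → Fin d) : Fin d → ℝ :=
  fun a => ((Finset.univ.filter (fun i => y i = a)).card : ℝ) / (n : ℝ)

/-- Membership in the simplex Δ(A). -/
def IsSimplex {d : ℕ} (f : Fin d → ℝ) : Prop :=
  (∀ a, 0 ≤ f a) ∧ ∑ a, f a = 1

/-- `ParetoImprove r q p` means `q ≻_r p`: q is a Pareto improvement over p w.r.t. r. -/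
def ParetoImprove {d : ℕ} (r q p : Fin d → ℝ) : Prop :=
  (∀ a, (p a ≤ q a ∧ q a ≤ r a) ∨ (r a ≤ q a ∧ q a ≤ p a)) ∧ ∃ a, p a ≠ q a

/-- The point-mass distribution `e_a`. -/
def pointMass {d : ℕ} (a : Fin d) : Fin d → ℝ := fun a' => if a' = a then 1 else 0

/-- One-dimensional Bregman divergence `d_b(u, v) = b(u) - b(v) - b'(v)(u - v)`. -/
noncomputable def dbreg (b b' : ℝ → ℝ) (u v : ℝ) : ℝ := b u - b v - b' v * (u - v)

/-- Diagonal bounded Bregman divergence loss `L(f, y) = ∑ₐ d_b(p̄(y)ₐ, fₐ)`. -/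
noncomputable def dbbdLoss (b b' : ℝ → ℝ) {d n : ℕ} (f : Fin d → ℝ)
    (y : Fin n → Fin d) : ℝ :=
  ∑ a, dbreg b b' (emp y a) (f a)

/-- Expectation of `g` over datasets of `n` i.i.d. draws from `p`. -/
noncomputable def expLoss {d : ℕ} (p : Fin d → ℝ) (n : ℕ)
    (g : (Fin n → Fin d) → ℝ) : ℝ :=
  ∑ y : Fin n → Fin d, (∏ i, p (y i)) * g y

/-- Loss induced by a scoring rule `S`. -/
noncomputable def srLoss {d : ℕ} (S : (Fin d → ℝ) → Fin d → ℝ) {n : ℕ}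
    (f : Fin d → ℝ) (y : Fin n → Fin d) : ℝ :=
  ((n : ℝ))⁻¹ * ∑ i, S f (y i)

theorem isSimplex_emp {d n : ℕ} (hn : 0 < n) (y : Fin n → Fin d) : IsSimplex (emp y) := by
  refine ⟨fun a => by unfold emp; positivity, ?_⟩
  have h := Finset.card_eq_sum_card_fiberwise (s := Finset.univ) (t := Finset.univ) (f := y)
    (fun _ _ => Finset.mem_coe.2 (Finset.mem_univ _))
  rw [Finset.card_univ, Fintype.card_fin] at h
  have hn' : (n : ℝ) ≠ 0 := by positivity
  simp only [emp]
  rw [← Finset.sum_div, ← Nat.cast_sum, ← h, div_self hn']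

/-- When the improved distribution equals the reference, Pareto improvement is just inequality. -/
theorem paretoImprove_self {d : ℕ} {f p : Fin d → ℝ} (h : ∃ a, p a ≠ f a) :
    ParetoImprove f f p :=
  ⟨fun a => (le_total (p a) (f a)).imp (fun h => ⟨h, le_rfl⟩) (fun h => ⟨le_rfl, h⟩), h⟩

theorem emp_pair {d : ℕ} {a b c : Fin d} (hab : a ≠ b) (hc : c = a ∨ c = b) :
    emp ![a, b] c = 1 / 2 := by
  rcases hc with rfl | rfl
  · simp [emp, Finset.card_filter, Fin.sum_univ_two, hab.symm, -Finset.sum_boole]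
  · simp [emp, Finset.card_filter, Fin.sum_univ_two, hab, -Finset.sum_boole]

/-- no scoring rule satisfies Counterfactual Pareto-Regularity. -/
theorem scoring_rule_violates_CPR (d : ℕ) (hd2 : 2 ≤ d)
    (S : (Fin d → ℝ) → Fin d → ℝ) :
    ∃ (f : Fin d → ℝ) (_ : IsSimplex f) (n : ℕ) (_ : 0 < n) (y y' : Fin n → Fin d),
      ParetoImprove f (emp y) (emp y') ∧ srLoss S f y' ≤ srLoss S f y := by
  obtain ⟨a, b, hab⟩ : ∃ a b : Fin d, a ≠ b :=
    ⟨⟨0, by omega⟩, ⟨1, by omega⟩, by simp⟩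
  obtain ⟨c, hc, hca, hcb⟩ : ∃ c, (c = a ∨ c = b) ∧
      S (emp ![a, b]) c ≤ S (emp ![a, b]) a ∧ S (emp ![a, b]) c ≤ S (emp ![a, b]) b := by
    rcases le_total (S (emp ![a, b]) a) (S (emp ![a, b]) b) with h | h
    · exact ⟨a, Or.inl rfl, le_rfl, h⟩
    · exact ⟨b, Or.inr rfl, h, le_rfl⟩
  refine ⟨emp ![a, b], isSimplex_emp two_pos _, 2, two_pos, ![a, b], fun _ => c,
    paretoImprove_self ⟨c, ?_⟩, ?_⟩
  · rw [emp_pair hab hc]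
    norm_num [emp]
  · simp only [srLoss, Fin.sum_univ_two, Matrix.cons_val_zero, Matrix.cons_val_one]
    gcongr
end

section
/- The squared L2 error L2(f, y) = Σ_{a=1}^d (f_a − p̄(y)_a)² satisfies all five axioms: (SPA) f ≻_{p̄(y)} g implies L2(f, y) < L2(g, y); (DPA) f ≻_p g implies E_{y∼p^n} L2(f, y) < E_{y∼p^n} L2(g, y) for all p ∈ Δ(A), n ≥ 1; (CPR) for equal-size datasets y, y′ with p̄(y) ≻_f p̄(y′), L2(f, y′) > L2(f, y); (Ex) L2(f, π(y)) = L2(f, y) for every permutation π; and (ZM) L2(p̄(y), y) = 0. -/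
/-!
The squared error is squared Euclidean distance, and a Pareto improvement with respect to `r`
moves every coordinate weakly closer to `r` and at least one strictly closer, so it strictly
decreases the distance to `r` (`sum_sq_lt_of_paretoImprove`). This gives SPA with `r` the empirical
distribution and CPR with `r` the forecast. For DPA, the empirical distribution is an unbiased
estimator of `p` (`expLoss_emp`); since the quadratic term in the empirical distribution does not
involve the forecast, the difference of the expected losses of `g` and `f` is
`∑ a, (g a - p a) ^ 2 - ∑ a, (f a - p a) ^ 2` (`expLoss_l2Loss_sub`), which is positive by the same
lemma. Ex holds because reindexing a dataset does not change its counts.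
-/

open Finset

/-- Squared L2 error. -/
noncomputable def l2Loss {d n : ℕ} (f : Fin d → ℝ) (y : Fin n → Fin d) : ℝ :=
  ∑ a, (f a - emp y a) ^ 2

/-- A Pareto improvement with respect to `r` is strictly closer to `r` in Euclidean distance. -/
theorem sum_sq_lt_of_paretoImprove {d : ℕ} {r q p : Fin d → ℝ} (h : ParetoImprove r q p) :
    ∑ a, (q a - r a) ^ 2 < ∑ a, (p a - r a) ^ 2 := by
  obtain ⟨h, a, ha⟩ := h
  refine Finset.sum_lt_sum (fun b _ => ?_) ⟨a, Finset.mem_univ a, ?_⟩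
  · rcases h b with ⟨h1, h2⟩ | ⟨h1, h2⟩ <;> nlinarith
  · rcases h a with ⟨h1, h2⟩ | ⟨h1, h2⟩
    · have := lt_of_le_of_ne h1 ha
      nlinarith
    · have := lt_of_le_of_ne h2 (Ne.symm ha)
      nlinarith

theorem emp_eq_sum {d n : ℕ} (y : Fin n → Fin d) (a : Fin d) :
    emp y a = (n : ℝ)⁻¹ * ∑ j, if y j = a then (1 : ℝ) else 0 := by
  simp [emp, div_eq_inv_mul]

theorem emp_perm {d n : ℕ} (y : Fin n → Fin d) (π : Equiv.Perm (Fin n)) :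
    emp (fun i => y (π i)) = emp y := by
  funext a
  rw [emp_eq_sum, emp_eq_sum, Equiv.sum_comp π (fun j => if y j = a then (1 : ℝ) else 0)]

theorem sum_prod_eq_one {d : ℕ} {p : Fin d → ℝ} (hp : IsSimplex p) (n : ℕ) :
    ∑ y : Fin n → Fin d, ∏ i, p (y i) = 1 := by
  rw [← Fintype.prod_sum (fun (_ : Fin n) b => p b)]
  simp [hp.2]

/-- Each single draw has marginal distribution `p`. -/
theorem expLoss_indicator {d : ℕ} {p : Fin d → ℝ} (hp : IsSimplex p) {n : ℕ} (j : Fin n)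
    (a : Fin d) : expLoss p n (fun y => if y j = a then 1 else 0) = p a := by
  unfold expLoss
  -- The indicator is absorbed into the `j`-th factor, so that the sum over datasets factorizes.
  have h : ∀ y : Fin n → Fin d, (∏ i, p (y i)) * (if y j = a then (1 : ℝ) else 0) =
      ∏ i, p (y i) * (if i = j then (if y i = a then 1 else 0) else 1) := by
    intro y
    rw [Finset.prod_mul_distrib, Finset.prod_ite_eq' Finset.univ j]
    simp
  simp_rw [h]
  rw [← Fintype.prod_sum
    (fun (i : Fin n) b => p b * (if i = j then (if b = a then (1 : ℝ) else 0) else 1))]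
  rw [Finset.prod_eq_single j]
  · simp
  · intro i _ hij
    simp [hij, hp.2]
  · simp

/-- The empirical distribution is an unbiased estimator of `p`. -/
theorem expLoss_emp {d : ℕ} {p : Fin d → ℝ} (hp : IsSimplex p) {n : ℕ} (hn : 0 < n)
    (a : Fin d) : expLoss p n (fun y => emp y a) = p a := by
  have hn' : (n : ℝ) ≠ 0 := by positivity
  have h : expLoss p n (fun y => emp y a) =
      (n : ℝ)⁻¹ * ∑ j : Fin n, expLoss p n (fun y => if y j = a then 1 else 0) := by
    unfold expLoss
    rw [Finset.sum_comm, Finset.mul_sum]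
    refine Finset.sum_congr rfl fun y _ => ?_
    simp only [emp_eq_sum, ← Finset.mul_sum]
    ring
  rw [h]
  simp_rw [expLoss_indicator hp]
  simp [hn']

theorem expLoss_l2Loss_sub {d : ℕ} (f g : Fin d → ℝ) {p : Fin d → ℝ} (hp : IsSimplex p) {n : ℕ}
    (hn : 0 < n) :
    expLoss p n (fun y => l2Loss g y) - expLoss p n (fun y => l2Loss f y) =
      ∑ a, (g a - p a) ^ 2 - ∑ a, (f a - p a) ^ 2 := by
  have h : expLoss p n (fun y => l2Loss g y) - expLoss p n (fun y => l2Loss f y) =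
      ∑ a, ((g a ^ 2 - f a ^ 2) * ∑ y : Fin n → Fin d, ∏ i, p (y i)
        - 2 * (g a - f a) * expLoss p n (fun y => emp y a)) := by
    unfold expLoss l2Loss
    simp_rw [Finset.mul_sum]
    rw [← Finset.sum_sub_distrib]
    simp_rw [← Finset.sum_sub_distrib]
    rw [Finset.sum_comm]
    refine Finset.sum_congr rfl fun a _ => Finset.sum_congr rfl fun y _ => ?_
    ring
  rw [h, ← Finset.sum_sub_distrib]
  refine Finset.sum_congr rfl fun a _ => ?_
  rw [sum_prod_eq_one hp, expLoss_emp hp hn]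
  ring

/-- the squared L2 error satisfies SPA, DPA, CPR, Ex, and ZM. -/
theorem l2_satisfies_all_axioms (d : ℕ) (hd2 : 2 ≤ d) :
    (∀ (f g : Fin d → ℝ), IsSimplex f → IsSimplex g →
      ∀ (n : ℕ), 0 < n → ∀ (y : Fin n → Fin d),
        ParetoImprove (emp y) f g → l2Loss f y < l2Loss g y) ∧
    (∀ (f g p : Fin d → ℝ), IsSimplex f → IsSimplex g → IsSimplex p →
      ∀ (n : ℕ), 0 < n → ParetoImprove p f g →
        expLoss p n (fun y => l2Loss f y) < expLoss p n (fun y => l2Loss g y)) ∧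
    (∀ (f : Fin d → ℝ), IsSimplex f → ∀ (n : ℕ), 0 < n → ∀ (y y' : Fin n → Fin d),
      ParetoImprove f (emp y) (emp y') → l2Loss f y < l2Loss f y') ∧
    (∀ (f : Fin d → ℝ), IsSimplex f → ∀ (n : ℕ), 0 < n → ∀ (y : Fin n → Fin d)
      (π : Equiv.Perm (Fin n)), l2Loss f (fun i => y (π i)) = l2Loss f y) ∧
    (∀ (n : ℕ), 0 < n → ∀ (y : Fin n → Fin d), l2Loss (emp y) y = 0) := by
  refine ⟨?_, ?_, ?_, ?_, ?_⟩
  · intro f g _ _ n _ y h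
    exact sum_sq_lt_of_paretoImprove h
  · intro f g p _ _ hp n hn h
    have h1 := expLoss_l2Loss_sub f g hp hn
    have h2 := sum_sq_lt_of_paretoImprove h
    linarith
  · intro f _ n _ y y' h
    have h1 := sum_sq_lt_of_paretoImprove h
    simp only [l2Loss, sub_sq_comm (f _)]
    exact h1
  · intro f _ n _ y π
    simp only [l2Loss, emp_perm]
  · intro n _ y
    simp [l2Loss]
end
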